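/- Let g be a prefix replacement permutation of the Cantor set C = ℕ → Bool of infinite order. Then there exists a positive integer m such that every finite orbit of the cyclic group generated by gᵐ acting on C is a singleton; that is, every point of C whose orbit under ⟨gᵐ⟩ is finite is a fixed point of gᵐ. -/

import Mathlib

/-- The Cantor set `C = ℕ → Bool`. -/
abbrev Cantor : Type := ℕ → Bool

/-- Prepend a finite word `a` to an element `ξ` of the Cantor set. -/
def prepend (a : List Bool) (ξ : Cantor) : Cantor :=
  fun n => if h : n < a.length then a.get ⟨n, h⟩ else ξ (n - a.length)

/-- A finite set of finite binary words is a complete antichain if distinct elements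
are incomparable in the prefix order and every `ξ : ℕ → Bool` has an initial segment
lying in it. -/
def IsCompleteAntichain (A : Set (List Bool)) : Prop :=
  A.Finite ∧
  (∀ a ∈ A, ∀ b ∈ A, a ≠ b → ¬ a <+: b) ∧
  (∀ ξ : Cantor, ∃ n : ℕ, (List.ofFn fun i : Fin n => ξ i) ∈ A)

/-- A permutation of the Cantor set is a prefix replacement map if it is given by
a bijection between two finite complete antichains of prefixes. -/
def IsPrefixReplacement (g : Equiv.Perm Cantor) : Prop :=
  ∃ A B : Set (List Bool), IsCompleteAntichain A ∧ IsCompleteAntichain B ∧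
    ∃ σ : A ≃ B, ∀ (a : A) (ξ : Cantor), g (prepend a ξ) = prepend (σ a : List Bool) ξ

/-!
Let `f` be injective and replace, as a prefix, every word of length `M` by some word. Near a point
`x` the map `f` then changes the length of prefixes by an integer `c x`, so an iterate `f^[j]`
replaces a prefix of `x` as long as the Birkhoff sums of `c` up to time `j` keep its length at
least `M`.

Let `x` have period `N`, and move along its orbit to a point `y` where these sums are minimal. With
`p` the prefix of `y` of length `M`, either `f^[N]` or its inverse has the form `pζ ↦ ptζ`. A map
`h` of this kind fixes all its periodic points in the cylinder of `p`, since such a point `pζ`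
makes `ζ` periodic under `ζ ↦ tζ`, which forces `ζ = ttt…` unless `t` is empty. Thus one exponent
`k` depending only on `p` is a period of all periodic points of `f` in that cylinder, and the
product of these exponents over the finitely many `p` is a period of every periodic point of `f`.
-/

open Function

section Words

/-- The word formed by the first `n` letters of `x`. -/
def initSeg (x : Cantor) (n : ℕ) : List Bool := List.ofFn fun i : Fin n => x i

@[simp] lemma length_initSeg (x : Cantor) (n : ℕ) : (initSeg x n).length = n :=
  List.length_ofFn

lemma initSeg_isPrefix (x : Cantor) {m n : ℕ} (h : m ≤ n) : initSeg x m <+: initSeg x n := by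
  rw [List.prefix_iff_getElem]
  exact ⟨by simpa using h, fun i hi => by simp [initSeg]⟩

lemma initSeg_prepend (a : List Bool) (ξ : Cantor) : initSeg (prepend a ξ) a.length = a := by
  apply List.ext_getElem <;> simp [initSeg, prepend]

lemma exists_prepend_initSeg_eq (x : Cantor) (n : ℕ) : ∃ ζ, prepend (initSeg x n) ζ = x := by
  refine ⟨fun i => x (i + n), funext fun k => ?_⟩
  by_cases h : k < n
  · simp [prepend, initSeg, h]
  · simp [prepend, h, Nat.sub_add_cancel (not_lt.mp h)]

@[simp] lemma prepend_nil (ξ : Cantor) : prepend [] ξ = ξ := by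
  funext n
  simp [prepend]

lemma prepend_append (a b : List Bool) (ξ : Cantor) :
    prepend (a ++ b) ξ = prepend a (prepend b ξ) := by
  funext n
  simp only [prepend, List.length_append, List.get_eq_getElem, List.getElem_append]
  split_ifs <;> first | rfl | omega | (congr 1; omega)

lemma prepend_injective (a : List Bool) : Injective (prepend a) := fun ξ η h => by
  funext n
  simpa [prepend] using congrFun h (a.length + n)

lemma iterate_prepend (a : List Bool) (n : ℕ) :
    (prepend a)^[n] = prepend (List.replicate n a).flatten := by
  induction n with
  | zero => funext ξ; simp
  | succ n ih =>
    funext ξ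
    rw [iterate_succ_apply', ih, List.replicate_succ, List.flatten_cons, prepend_append]

lemma eq_of_prepend_eq_self {a : List Bool} (ha : a ≠ []) {ξ η : Cantor}
    (hξ : prepend a ξ = ξ) (hη : prepend a η = η) : ξ = η := by
  have ha : 0 < a.length := List.length_pos_of_ne_nil ha
  funext i
  induction i using Nat.strong_induction_on with
  | _ i ih =>
    rw [← hξ, ← hη]
    by_cases h : i < a.length
    · simp [prepend, h]
    · simpa [prepend, h] using ih (i - a.length) (by omega)

lemma isFixedPt_prepend_of_mem_periodicPts {a : List Bool} {ξ : Cantor}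
    (hξ : ξ ∈ periodicPts (prepend a)) : IsFixedPt (prepend a) ξ := by
  rcases eq_or_ne a [] with rfl | ha
  · exact prepend_nil ξ
  obtain ⟨n, hn, hξn⟩ := hξ
  have hflat : (List.replicate n a).flatten ≠ [] := by
    simp [List.flatten_eq_nil_iff, hn.ne', ha]
  refine eq_of_prepend_eq_self hflat ?_ ?_ <;> rw [← iterate_prepend]
  exacts [hξn.apply, hξn]

end Words

section Dynamics

variable {α : Type*}

lemma periodicPts_iterate_subset (f : α → α) {m : ℕ} (hm : 0 < m) :
    periodicPts f^[m] ⊆ periodicPts f := by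
  rintro x ⟨n, hn, hx⟩
  refine mk_mem_periodicPts (Nat.mul_pos hm hn) ?_
  rwa [IsPeriodicPt, iterate_mul]

lemma mem_periodicPts_of_finite_range_zpow {g : Equiv.Perm α} {x : α}
    (h : (Set.range fun n : ℤ => (g ^ n) x).Finite) : x ∈ periodicPts g := by
  have hsub : MulAction.orbit (Subgroup.zpowers g) x ⊆ Set.range fun n : ℤ => (g ^ n) x := by
    rintro _ ⟨⟨_, n, rfl⟩, rfl⟩
    exact ⟨n, rfl⟩
  have : Finite (MulAction.orbit (Subgroup.zpowers g) x) := h.subset hsub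
  exact minimalPeriod_pos_iff_mem_periodicPts.mp (NeZero.pos (minimalPeriod (g • ·) x))

lemma exists_min_zero_le_birkhoffSum {G : Type*} [AddCommGroup G] [LinearOrder G]
    [IsOrderedAddMonoid G] {f : α → α} {N : ℕ} {x : α} (hN : 0 < N) (hx : IsPeriodicPt f N x)
    (c : α → G) :
    ∃ n, ∀ i < N, min 0 (birkhoffSum f c N (f^[n] x)) ≤ birkhoffSum f c i (f^[n] x) := by
  set S : ℕ → G := fun n => birkhoffSum f c n x with hS
  have hshift : ∀ n i, birkhoffSum f c i (f^[n] x) = S (n + i) - S n := fun n i => by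
    simp only [hS, birkhoffSum_add, add_sub_cancel_left]
  have hperiod : ∀ i, S (N + i) = S N + S i := fun i => by
    simp only [hS, birkhoffSum_add, hx.eq]
  obtain ⟨n, hn, hmin⟩ :=
    Finset.exists_min_image (Finset.range N) S (Finset.nonempty_range_iff.mpr hN.ne')
  rw [Finset.mem_range] at hn
  refine ⟨n, fun i hi => ?_⟩
  rw [hshift, hshift, add_comm n N, hperiod, add_sub_cancel_right]
  rcases lt_or_ge (n + i) N with h | h
  · exact min_le_of_left_le (sub_nonneg.mpr (hmin _ (Finset.mem_range.mpr h)))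
  · obtain ⟨d, hd⟩ := Nat.exists_eq_add_of_le h
    have hSd : S n ≤ S d := hmin d (Finset.mem_range.mpr (by omega))
    rw [hd, hperiod, add_sub_assoc]
    exact min_le_of_right_le (le_add_of_nonneg_right (sub_nonneg.mpr hSd))

end Dynamics

/-- `f` maps the cylinder of `u` to the cylinder of `v` by replacing the prefix `u` by `v`. -/
def ReplacesPrefix (f : Cantor → Cantor) (u v : List Bool) : Prop :=
  ∀ ζ, f (prepend u ζ) = prepend v ζ

namespace ReplacesPrefix

variable {f g : Cantor → Cantor} {u v w : List Bool}

lemma append_right (h : ReplacesPrefix f u v) (r : List Bool) :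
    ReplacesPrefix f (u ++ r) (v ++ r) := fun ζ => by
  rw [prepend_append, prepend_append, h]

lemma comp (hg : ReplacesPrefix g v w) (hf : ReplacesPrefix f u v) :
    ReplacesPrefix (g ∘ f) u w := fun ζ => by
  rw [comp_apply, hf, hg]

lemma eq_initSeg {x : Cantor} {L : ℕ} (h : ReplacesPrefix f (initSeg x L) v) :
    v = initSeg (f x) v.length := by
  obtain ⟨ζ, hζ⟩ := exists_prepend_initSeg_eq x L
  rw [← hζ, h, initSeg_prepend]

end ReplacesPrefix

lemma IsPrefixReplacement.exists_replacesPrefix {g : Equiv.Perm Cantor}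
    (hg : IsPrefixReplacement g) :
    ∃ M, ∀ w : List Bool, w.length = M → ∃ v, ReplacesPrefix g w v := by
  obtain ⟨A, B, ⟨hAfin, -, hA⟩, -, σ, hσ⟩ := hg
  obtain ⟨M, hM⟩ := (hAfin.image List.length).bddAbove
  refine ⟨M, fun w hw => ?_⟩
  set ξ : Cantor := prepend w fun _ => false
  obtain ⟨n, hn : initSeg ξ n ∈ A⟩ := hA ξ
  have hnM : n ≤ M := by simpa using hM (Set.mem_image_of_mem List.length hn)
  obtain ⟨r, hr⟩ := initSeg_isPrefix ξ hnM
  rw [← hw, initSeg_prepend] at hr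
  rw [← hr]
  exact ⟨_, ReplacesPrefix.append_right (hσ ⟨_, hn⟩) r⟩

/-- Near `x`, the map `f` changes the length of prefixes by `c x`: it replaces each prefix of `x`
of length `L ≥ M` by the prefix of `f x` of length `L + c x`, written `L'` as a natural number. -/
def IsLengthCocycle (f : Cantor → Cantor) (M : ℕ) (c : Cantor → ℤ) : Prop :=
  ∀ ⦃x : Cantor⦄ ⦃L L' : ℕ⦄, M ≤ L → (L' : ℤ) = L + c x →
    ReplacesPrefix f (initSeg x L) (initSeg (f x) L')

lemma exists_isLengthCocycle {f : Cantor → Cantor} {M : ℕ}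
    (hf : ∀ w : List Bool, w.length = M → ∃ v, ReplacesPrefix f w v) :
    ∃ c, IsLengthCocycle f M c := by
  choose v hv using fun x : Cantor => hf (initSeg x M) (length_initSeg x M)
  refine ⟨fun x => (v x).length - M, fun x L L' hL hL' => ?_⟩
  obtain ⟨r, hr⟩ := initSeg_isPrefix x hL
  have hrep : ReplacesPrefix f (initSeg x L) (v x ++ r) := hr ▸ (hv x).append_right r
  have hlen : (v x ++ r).length = L' := by
    have := congrArg List.length hr
    simp only [List.length_append, length_initSeg] at this hL' ⊢
    omega
  rwa [hrep.eq_initSeg, hlen] at hrep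

lemma IsLengthCocycle.iterate {f : Cantor → Cantor} {M : ℕ} {c : Cantor → ℤ}
    (hc : IsLengthCocycle f M c) {x : Cantor} {L : ℕ} (j : ℕ) {L' : ℕ}
    (hL : ∀ i < j, (M : ℤ) ≤ L + birkhoffSum f c i x)
    (hL' : (L' : ℤ) = L + birkhoffSum f c j x) :
    ReplacesPrefix f^[j] (initSeg x L) (initSeg (f^[j] x) L') := by
  induction j generalizing L' with
  | zero =>
    obtain rfl : L' = L := by simpa using hL'
    exact fun _ => rfl
  | succ j ih =>
    have hj := hL j j.lt_succ_self
    obtain ⟨K, hK⟩ := Int.eq_ofNat_of_zero_le ((Int.natCast_nonneg M).trans hj)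
    rw [birkhoffSum_succ, ← add_assoc, hK] at hL'
    rw [iterate_succ', comp_apply]
    exact (hc (by omega) hL').comp (ih (fun i hi => hL i (by omega)) hK.symm)

/-- On the cylinder of `p`, either `h` or its inverse inserts a fixed, possibly empty, word `t`
after `p`. -/
def PumpsPrefix (h : Cantor → Cantor) (p : List Bool) : Prop :=
  ∃ t, ReplacesPrefix h p (p ++ t) ∨ ReplacesPrefix h (p ++ t) p

lemma PumpsPrefix.isFixedPt {h : Cantor → Cantor} {p : List Bool} {ζ : Cantor}
    (hp : PumpsPrefix h p) (hinj : Injective h) (hζ : prepend p ζ ∈ periodicPts h) :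
    IsFixedPt h (prepend p ζ) := by
  obtain ⟨N, hN, hper⟩ := hζ
  obtain ⟨t, ht | ht⟩ := hp
  · have hsemi : Semiconj (prepend p) (prepend t) h := fun ζ => by rw [ht, prepend_append]
    have htζ : IsPeriodicPt (prepend t) N ζ := prepend_injective p <| by
      rw [(hsemi.iterate_right N).eq, hper.eq]
    exact (isFixedPt_prepend_of_mem_periodicPts (mk_mem_periodicPts hN htζ)).map hsemi
  · have hcancel : ∀ n η, h^[n] (prepend p ((prepend t)^[n] η)) = prepend p η := by
      intro n
      induction n with
      | zero => exact fun η => rfl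
      | succ n ih =>
        intro η
        rw [iterate_succ_apply, iterate_succ_apply', ← prepend_append, ht, ih]
    have htζ : IsPeriodicPt (prepend t) N ζ := prepend_injective p <| hinj.iterate N <| by
      rw [hcancel, hper.eq]
    have hfix := isFixedPt_prepend_of_mem_periodicPts (mk_mem_periodicPts hN htζ)
    calc h (prepend p ζ) = h (prepend (p ++ t) ζ) := by rw [prepend_append, hfix.eq]
      _ = prepend p ζ := ht ζ

lemma IsLengthCocycle.exists_pumpsPrefix {f : Cantor → Cantor} {M : ℕ} {c : Cantor → ℤ}
    (hc : IsLengthCocycle f M c) {x : Cantor} {N : ℕ} (hN : 0 < N) (hx : IsPeriodicPt f N x) :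
    ∃ n, PumpsPrefix f^[N] (initSeg (f^[n] x) M) := by
  obtain ⟨n, hn⟩ := exists_min_zero_le_birkhoffSum hN hx c
  have hy : f^[N] (f^[n] x) = f^[n] x := hx.apply_iterate n
  refine ⟨n, ?_⟩
  generalize f^[n] x = y at hn hy
  rcases le_total 0 (birkhoffSum f c N y) with hs | hs
  · obtain ⟨k, hk⟩ := Int.eq_ofNat_of_zero_le hs
    have hrep := hc.iterate (x := y) (L := M) (L' := M + k) N
      (fun i hi => by have := hn i hi; omega) (by push_cast; omega)
    obtain ⟨t, ht⟩ := initSeg_isPrefix y (Nat.le_add_right M k)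
    rw [hy, ← ht] at hrep
    exact ⟨t, Or.inl hrep⟩
  · -- The prefix must be long enough to survive the total loss of `k` letters.
    obtain ⟨k, hk⟩ := Int.eq_ofNat_of_zero_le (neg_nonneg.mpr hs)
    have hrep := hc.iterate (x := y) (L := M + k) (L' := M) N
      (fun i hi => by have := hn i hi; push_cast; omega) (by push_cast; omega)
    obtain ⟨t, ht⟩ := initSeg_isPrefix y (Nat.le_add_right M k)
    rw [hy, ← ht] at hrep
    exact ⟨t, Or.inr hrep⟩

lemma exists_pos_forall_isPeriodicPt_prepend {f : Cantor → Cantor} (hf : Injective f)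
    (p : List Bool) :
    ∃ k, 0 < k ∧ ((∃ n > 0, PumpsPrefix f^[n] p) →
      ∀ ζ, prepend p ζ ∈ periodicPts f → IsPeriodicPt f k (prepend p ζ)) := by
  by_cases h : ∃ n > 0, PumpsPrefix f^[n] p
  · obtain ⟨k, hk, hp⟩ := h
    refine ⟨k, hk, fun _ ζ ⟨N, hN, hζ⟩ => ?_⟩
    exact hp.isFixedPt (hf.iterate k) (mk_mem_periodicPts hN (hζ.iterate k))
  · exact ⟨1, one_pos, fun h' => absurd h' h⟩

theorem exists_power_with_no_nontrivial_finite_orbits_general {f : Cantor → Cantor}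
    (hf : Injective f) {M : ℕ}
    (hM : ∀ w : List Bool, w.length = M → ∃ v, ReplacesPrefix f w v) :
    ∃ m, 0 < m ∧ ∀ x ∈ periodicPts f, IsPeriodicPt f m x := by
  obtain ⟨c, hc⟩ := exists_isLengthCocycle hM
  choose k hkpos hk using exists_pos_forall_isPeriodicPt_prepend hf
  set W : Finset (List Bool) := (List.finite_length_eq Bool M).toFinset
  refine ⟨∏ w ∈ W, k w, Finset.prod_pos fun w _ => hkpos w, fun x hx => ?_⟩
  obtain ⟨N, hN, hxN⟩ := hx
  obtain ⟨n, hpump⟩ := hc.exists_pumpsPrefix hN hxN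
  obtain ⟨ζ, hζ⟩ := exists_prepend_initSeg_eq (f^[n] x) M
  have hy : IsPeriodicPt f (k (initSeg (f^[n] x) M)) (f^[n] x) := by
    have := hk _ ⟨N, hN, hpump⟩ ζ
    rw [hζ] at this
    exact this (mk_mem_periodicPts hN (hxN.apply_iterate n))
  have hdvd : k (initSeg (f^[n] x) M) ∣ ∏ w ∈ W, k w := Finset.dvd_prod_of_mem k (by simp [W])
  exact isPeriodicPt_of_mem_periodicPts_of_isPeriodicPt_iterate (mk_mem_periodicPts hN hxN)
    (hy.trans_dvd hdvd)

/-- If `g` is a prefix replacement permutation of the Cantor set of infinite order,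
then there is a positive integer `m` such that every finite orbit of `⟨gᵐ⟩` on the
Cantor set is a singleton: every point with finite `⟨gᵐ⟩`-orbit is fixed by `gᵐ`. -/
theorem exists_power_with_no_nontrivial_finite_orbits (g : Equiv.Perm Cantor)
    (hg : IsPrefixReplacement g) (hord : ¬ IsOfFinOrder g) :
    ∃ m : ℕ, 0 < m ∧ ∀ ξ : Cantor,
      (Set.range fun n : ℤ => ((g ^ m) ^ n) ξ).Finite → (g ^ m) ξ = ξ := by
  obtain ⟨M, hM⟩ := hg.exists_replacesPrefix
  obtain ⟨m, hm, h⟩ := exists_power_with_no_nontrivial_finite_orbits_general g.injective hM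
  exact ⟨m, hm, fun ξ hξ => h ξ (periodicPts_iterate_subset g hm
    (mem_periodicPts_of_finite_range_zpow hξ))⟩
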